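/- Let X be a strictly stable random variable with parameters (ν, θ, τ). Then E[(log|X|)³] = τ³ + 3τ·DV + 2ζ(3)(ν^{3/2} − 1). -/

import Mathlib

open MeasureTheory ProbabilityTheory

/-- The real value of the Riemann zeta function at a real argument. -/
noncomputable def zetaR (s : ℝ) : ℝ := (riemannZeta (s : ℂ)).re

/-- A real random variable `X` is strictly stable with parameters `(ν, θ, τ)` if
`ν ≥ 1/4`, `|θ| ≤ min 1 (2√ν − 1)`, `P(X = 0) = 0`, `log |X|` has finite absolute
moments of every order, and the characteristic function of `X` is
`E[exp(i k X)] = exp(−exp(ν^{−1/2}(log|k| + τ − i(π/2)θ sign k) + C(ν^{−1/2} − 1)))`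
for all real `k ≠ 0`, where `C` is the Euler–Mascheroni constant. -/
def IsStrictlyStable {Ω : Type*} [MeasureSpace Ω] (X : Ω → ℝ) (ν θ τ : ℝ) : Prop :=
  Measurable X ∧ (1/4 : ℝ) ≤ ν ∧ |θ| ≤ min 1 (2 * Real.sqrt ν - 1) ∧
  (ℙ : Measure Ω) {ω | X ω = 0} = 0 ∧
  (∀ p : ℕ, Integrable (fun ω => (abs (Real.log (abs (X ω)))) ^ p)) ∧
  ∀ k : ℝ, k ≠ 0 →
    (∫ ω, Complex.exp (Complex.I * (k : ℂ) * (X ω : ℂ))) =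
      Complex.exp (-Complex.exp
        (((ν ^ (-(1/2) : ℝ) : ℝ) : ℂ) *
            (((Real.log |k| : ℝ) : ℂ) + (τ : ℂ) -
              Complex.I * ((Real.pi / 2 : ℝ) : ℂ) * (θ : ℂ) * ((Real.sign k : ℝ) : ℂ)) +
          ((Real.eulerMascheroniConstant : ℝ) : ℂ) * (((ν ^ (-(1/2) : ℝ) : ℝ) : ℂ) - 1)))

/-!
For a law `μ` without atom at `0`, integrating `(ε - i x) ^ (-s)` against `μ` and letting `ε → 0`
identifies the Mellin transform of `charFun μ` at `s ∈ (0, 1)` with `Γ(s)` times the integral of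
`(-i x) ^ (-s)`, whose real part is `cos (π s / 2) E|X| ^ (-s)`. For a strictly stable law, with
`β = √ν`, the Mellin transform is a Gamma integral, so that
`E|X| ^ (-s) = Γ(1 + β s) / Γ(1 + s) * e ^ (-(τ + C (1 - β)) s) * cos (π θ s / 2) / cos (π s / 2)`.
The logarithm of the right-hand side is the cumulant generating function of `-log |X|`; its
expansion at `s = 0⁺` up to order 3 gives the first three cumulants `-τ`, `DV` and
`-2 ζ(3) (β ^ 3 - 1)`.
In the boundary case `|θ| = √ν`, where the scale of the law is purely imaginary, the constraints on
the parameters force `ν = |θ| = 1`, and `X` is almost surely the constant `θ e ^ τ`.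
-/

section Asymptotics

open Asymptotics Filter Set Topology Finset

lemma eq_zero_of_sum_mul_pow_isBigO {n : ℕ} {c : ℕ → ℝ}
    (h : (fun t : ℝ => ∑ k ∈ range n, c k * t ^ k) =O[𝓝[>] 0] (fun t => t ^ n)) :
    ∀ k < n, c k = 0 := by
  induction n generalizing c with
  | zero => simp
  | succ n ih =>
    have h_zero : c 0 = 0 := by
      have h_lim : Tendsto (fun t : ℝ => ∑ k ∈ range (n + 1), c k * t ^ k) (𝓝[>] 0) (𝓝 (c 0)) := by
        have h_cont : Continuous fun t : ℝ => ∑ k ∈ range (n + 1), c k * t ^ k := by fun_prop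
        simpa [sum_range_succ'] using (h_cont.tendsto 0).mono_left nhdsWithin_le_nhds
      have h_pow : Tendsto (fun t : ℝ => t ^ (n + 1)) (𝓝[>] 0) (𝓝 0) := by
        simpa using ((continuous_pow (n + 1)).tendsto (0 : ℝ)).mono_left nhdsWithin_le_nhds
      exact tendsto_nhds_unique h_lim (h.trans_tendsto h_pow)
    have h_tail : (fun t : ℝ => ∑ k ∈ range n, c (k + 1) * t ^ k) =O[𝓝[>] 0] (fun t => t ^ n) := by
      refine (h.mul (isBigO_refl (fun t : ℝ => t⁻¹) _)).congr' ?_ ?_ <;>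
        filter_upwards [self_mem_nhdsWithin] with t (ht : 0 < t)
      · simp [sum_range_succ', h_zero, sum_mul, pow_succ, mul_assoc, ht.ne']
      · simp [pow_succ, ht.ne']
    rintro (_ | k) hk
    · exact h_zero
    · exact ih h_tail k (Nat.lt_of_succ_lt_succ hk)

lemma exp_sub_exp_isBigO {ι : Type*} {l : Filter ι} {f g u : ι → ℝ} {a : ℝ}
    (hg : Tendsto g l (𝓝 a)) (hu : Tendsto u l (𝓝 0)) (hfg : (fun i => f i - g i) =O[l] u) :
    (fun i => Real.exp (f i) - Real.exp (g i)) =O[l] u := by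
  have h_diff : (fun i => Real.exp (f i - g i) - 1) =O[l] u := by
    refine IsBigO.trans ?_ hfg
    simpa [Function.comp_def] using
      (Real.exp_sub_sum_range_isBigO_pow 1).comp_tendsto (hfg.trans_tendsto hu)
  have h_bdd : (fun i => Real.exp (g i)) =O[l] (fun _ => (1 : ℝ)) :=
    ((Real.continuous_exp.tendsto a).comp hg).isBigO_one ℝ
  refine (h_bdd.mul h_diff).congr (fun i => ?_) (fun i => one_mul _)
  rw [mul_sub, ← Real.exp_add, add_sub_cancel, mul_one]

lemma pow_mul_isBigO_pow {q : ℝ → ℝ} (hq : Continuous q) (n : ℕ) :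
    (fun t => t ^ n * q t) =O[𝓝 0] (fun t => t ^ n) := by
  simpa using (isBigO_refl (fun t : ℝ => t ^ n) (𝓝 0)).mul ((hq.tendsto 0).isBigO_one ℝ)

lemma exp_cubic_sub_isBigO (a b c : ℝ) :
    (fun t => Real.exp (a * t + b * t ^ 2 + c * t ^ 3) -
        (1 + a * t + (a ^ 2 / 2 + b) * t ^ 2 + (a ^ 3 / 6 + a * b + c) * t ^ 3))
      =O[𝓝 0] (fun t => t ^ 4) := by
  set p : ℝ → ℝ := fun t => a * t + b * t ^ 2 + c * t ^ 3 with hp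
  have h_linear : p =O[𝓝 0] (fun t => t) := by
    refine (pow_mul_isBigO_pow (q := fun t => a + b * t + c * t ^ 2) (by fun_prop) 1).congr
      (fun t => ?_) pow_one
    simp only [hp]; ring
  have h_exp : (fun t => Real.exp (p t) - (1 + p t + p t ^ 2 / 2 + p t ^ 3 / 6))
      =O[𝓝 0] (fun t => t ^ 4) := by
    refine (((Real.exp_sub_sum_range_isBigO_pow 4).comp_tendsto
      (h_linear.trans_tendsto tendsto_id)).trans (h_linear.pow 4)).congr_left fun t => ?_
    simp [sum_range_succ, Nat.factorial]
  have h_trunc : (fun t => 1 + p t + p t ^ 2 / 2 + p t ^ 3 / 6 -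
      (1 + a * t + (a ^ 2 / 2 + b) * t ^ 2 + (a ^ 3 / 6 + a * b + c) * t ^ 3))
      =O[𝓝 0] (fun t => t ^ 4) := by
    let q : ℝ → ℝ := fun t => a * c + (b + c * t) ^ 2 / 2 + a ^ 2 * (b + c * t) / 2 +
      a * (b + c * t) ^ 2 * t / 2 + (b + c * t) ^ 3 * t ^ 2 / 6
    refine (pow_mul_isBigO_pow (q := q) (by fun_prop) 4).congr_left fun t => ?_
    simp only [hp, q]; ring
  exact (h_exp.add h_trunc).congr_left fun t => sub_add_sub_cancel _ _ _

lemma log_cos_add_sq_isBigO :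
    (fun x : ℝ => Real.log (Real.cos x) + x ^ 2 / 2) =O[𝓝 0] (fun x => x ^ 4) := by
  refine IsBigO.of_bound 2 ?_
  filter_upwards [Metric.ball_mem_nhds (0 : ℝ) one_pos] with x hx
  have hx1 : |x| ≤ 1 := by simpa using (mem_ball_zero_iff.mp hx).le
  have hsq : x ^ 2 ≤ 1 := (sq_le_one_iff_abs_le_one x).mpr hx1
  have h_cos := Real.cos_bound hx1
  rw [Even.pow_abs (by decide), abs_le] at h_cos
  set y := 1 - Real.cos x with hy
  have hy0 : 0 ≤ y := sub_nonneg.mpr (Real.cos_le_one x)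
  have hyx : y ≤ x ^ 2 / 2 := by linarith [Real.one_sub_sq_div_two_le_cos (x := x)]
  have h_log : |y + Real.log (Real.cos x)| ≤ y ^ 2 / (1 - y) := by
    have := Real.abs_log_sub_add_sum_range_le (x := y) (by rw [abs_of_nonneg hy0]; linarith) 1
    rw [abs_of_nonneg hy0] at this
    simpa [hy] using this
  have h_sq : y ^ 2 / (1 - y) ≤ x ^ 4 / 2 := by
    rw [div_le_iff₀ (by linarith)]
    nlinarith
  rw [Real.norm_eq_abs, Real.norm_of_nonneg (by positivity : (0:ℝ) ≤ x ^ 4)]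
  rw [abs_le] at h_log ⊢
  constructor <;> linarith [h_log.1, h_log.2, h_cos.1, h_cos.2, pow_nonneg (sq_nonneg x) 2]

end Asymptotics

section Cumulants

open Asymptotics Filter Set Topology Finset

lemma abs_exp_sub_sum_range_le (n : ℕ) (x : ℝ) :
    |Real.exp x - ∑ k ∈ range n, x ^ k / k.factorial| ≤ |x| ^ n * (1 + Real.exp x) := by
  rcases n with _ | n
  · simp [abs_of_pos (Real.exp_pos x)]
  rcases eq_or_ne 0 x with rfl | hx
  · simp [sum_range_succ']
  obtain ⟨ξ, hξ, h_rem⟩ := taylor_mean_remainder_lagrange_iteratedDeriv (n := n) hx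
    Real.contDiff_exp.contDiffOn
  have h_taylor : taylorWithinEval Real.exp n (uIcc 0 x) 0 x =
      ∑ k ∈ range (n + 1), x ^ k / k.factorial := by
    rw [taylor_within_apply]
    refine sum_congr rfl fun k _ => ?_
    rw [iteratedDerivWithin_eq_iteratedDeriv (uniqueDiffOn_uIcc hx) Real.contDiff_exp.contDiffAt
      left_mem_uIcc]
    simp [iteratedDeriv_eq_iterate, div_eq_inv_mul]
  have hξ_exp : Real.exp ξ ≤ 1 + Real.exp x := by
    have hξ_max : ξ ≤ max 0 x := (uIoo_subset_uIcc_self hξ).2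
    rcases le_max_iff.mp hξ_max with h | h
    · linarith [Real.exp_le_one_iff.mpr h, Real.exp_pos x]
    · linarith [Real.exp_le_exp.mpr h]
  rw [← h_taylor, h_rem, iteratedDeriv_eq_iterate, Real.iter_deriv_exp, sub_zero, abs_div, abs_mul,
    abs_pow, Real.abs_exp, Nat.abs_cast, mul_comm]
  refine (div_le_self (by positivity) (mod_cast Nat.factorial_pos _)).trans ?_
  gcongr

variable {Ω : Type*} {mΩ : MeasurableSpace Ω} {X : Ω → ℝ} {μ : Measure Ω}

lemma exp_mul_le_one_add_exp_mul {s t : ℝ} (hs : 0 ≤ s) (hst : s ≤ t) (x : ℝ) :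
    Real.exp (s * x) ≤ 1 + Real.exp (t * x) := by
  rcases le_total 0 x with hx | hx
  · linarith [Real.exp_le_exp.mpr (mul_le_mul_of_nonneg_right hst hx)]
  · linarith [Real.exp_le_one_iff.mpr (mul_nonpos_of_nonneg_of_nonpos hs hx), Real.exp_pos (t * x)]

lemma mgf_sub_sum_moment_isBigO [IsFiniteMeasure μ] {t₀ : ℝ} (ht₀ : 0 < t₀)
    (h_exp : Integrable (fun ω => Real.exp (t₀ * X ω)) μ) {n : ℕ} (hX : MemLp X n μ) :
    (fun t => mgf X μ t - ∑ k ∈ range n, moment X k μ / k.factorial * t ^ k)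
      =O[𝓝[>] 0] (fun t => t ^ n) := by
  have h_mem {t : ℝ} (ht : t ∈ Ioo 0 t₀) : t ∈ interior (integrableExpSet X μ) := by
    have h_Icc : Icc 0 t₀ ⊆ integrableExpSet X μ :=
      convex_integrableExpSet.ordConnected.out (by simp [integrableExpSet]) h_exp
    exact interior_mono h_Icc (by rwa [interior_Icc])
  have h_abs_pow : Integrable (fun ω => |X ω| ^ n) μ := hX.integrable_norm_pow'
  have h_dom : Integrable (fun ω => |X ω| ^ n * (2 + Real.exp (t₀ / 2 * X ω))) μ := by
    simp_rw [mul_add]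
    exact (h_abs_pow.mul_const 2).add (integrable_pow_abs_mul_exp_of_mem_interior_integrableExpSet
      (h_mem ⟨by positivity, by linarith⟩) n)
  refine IsBigO.of_bound (∫ ω, |X ω| ^ n * (2 + Real.exp (t₀ / 2 * X ω)) ∂μ) ?_
  filter_upwards [Ioo_mem_nhdsGT (half_pos ht₀)] with t ht
  have h_int_pow {k : ℕ} (hk : k < n) :
      Integrable (fun ω => (t * X ω) ^ k / k.factorial) μ := by
    simp_rw [mul_pow]
    refine (Integrable.const_mul ?_ _).div_const _
    exact (hX.mono_exponent (mod_cast hk.le)).integrable_norm_pow'.mono'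
      (hX.1.pow k) (.of_forall fun ω => (norm_pow _ _).le)
  have h_sub : mgf X μ t - ∑ k ∈ range n, moment X k μ / k.factorial * t ^ k =
      ∫ ω, (Real.exp (t * X ω) - ∑ k ∈ range n, (t * X ω) ^ k / k.factorial) ∂μ := by
    have h_int_exp : Integrable (fun ω => Real.exp (t * X ω)) μ :=
      interior_subset (s := integrableExpSet X μ) (h_mem ⟨ht.1, by linarith [ht.2]⟩)
    rw [integral_sub h_int_exp
      (integrable_finsetSum _ fun k hk => h_int_pow (mem_range.mp hk)),
      integral_finsetSum _ fun k hk => h_int_pow (mem_range.mp hk), mgf]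
    simp_rw [integral_div, mul_pow, integral_const_mul, moment, Pi.pow_apply]
    congr! 2
    ring
  rw [h_sub, norm_pow, ← integral_mul_const]
  refine norm_integral_le_of_norm_le (h_dom.mul_const _) (.of_forall fun ω => ?_)
  have h_mono := exp_mul_le_one_add_exp_mul ht.1.le ht.2.le (X ω)
  calc ‖Real.exp (t * X ω) - ∑ k ∈ range n, (t * X ω) ^ k / k.factorial‖
      ≤ |t * X ω| ^ n * (1 + Real.exp (t * X ω)) := abs_exp_sub_sum_range_le n _
    _ ≤ |t * X ω| ^ n * (2 + Real.exp (t₀ / 2 * X ω)) := by gcongr ?_ * ?_; linarith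
    _ = |X ω| ^ n * (2 + Real.exp (t₀ / 2 * X ω)) * ‖t‖ ^ n := by
      rw [abs_mul, mul_pow, Real.norm_eq_abs]; ring

lemma moment_three_eq_of_cgf_isBigO [IsProbabilityMeasure μ] {t₀ : ℝ} (ht₀ : 0 < t₀)
    (h_exp : Integrable (fun ω => Real.exp (t₀ * X ω)) μ) (hX : MemLp X 4 μ) {κ₁ κ₂ κ₃ : ℝ}
    (h_cgf : (fun t => cgf X μ t - (κ₁ * t + κ₂ / 2 * t ^ 2 + κ₃ / 6 * t ^ 3))
      =O[𝓝[>] 0] (fun t => t ^ 4)) :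
    moment X 3 μ = κ₁ ^ 3 + 3 * κ₁ * κ₂ + κ₃ := by
  set c : ℕ → ℝ := fun k => ([1, κ₁, κ₁ ^ 2 / 2 + κ₂ / 2, κ₁ ^ 3 / 6 + κ₁ * (κ₂ / 2) + κ₃ / 6] :
    List ℝ).getD k 0 with hc
  have h_mgf : (fun t => mgf X μ t - ∑ k ∈ range 4, c k * t ^ k) =O[𝓝[>] 0] (fun t => t ^ 4) := by
    have h_cubic : Continuous fun t => κ₁ * t + κ₂ / 2 * t ^ 2 + κ₃ / 6 * t ^ 3 := by fun_prop
    have h_exp_cgf := (exp_sub_exp_isBigO ((h_cubic.tendsto 0).mono_left nhdsWithin_le_nhds)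
      (by simpa using ((continuous_pow 4).tendsto (0 : ℝ)).mono_left nhdsWithin_le_nhds) h_cgf).add
      ((exp_cubic_sub_isBigO κ₁ (κ₂ / 2) (κ₃ / 6)).mono nhdsWithin_le_nhds)
    refine h_exp_cgf.congr' ?_ .rfl
    filter_upwards [Ioo_mem_nhdsGT ht₀] with t ht
    have h_int : Integrable (fun ω => Real.exp (t * X ω)) μ :=
      convex_integrableExpSet.ordConnected.out (by simp [integrableExpSet]) h_exp
        (Ioo_subset_Icc_self ht)
    rw [exp_cgf h_int, sub_add_sub_cancel]
    simp [hc, sum_range_succ]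
  have h_coeff := eq_zero_of_sum_mul_pow_isBigO (n := 4)
    (c := fun k => moment X k μ / k.factorial - c k)
    ((h_mgf.sub (mgf_sub_sum_moment_isBigO ht₀ h_exp hX)).congr_left fun t => by
      simp only [sub_mul, sum_sub_distrib]; ring) 3 (by norm_num)
  have h_three : moment X 3 μ / 6 = κ₁ ^ 3 / 6 + κ₁ * (κ₂ / 2) + κ₃ / 6 := by
    simpa [hc, Nat.factorial, sub_eq_zero] using h_coeff
  linarith

end Cumulants

section LogGamma

open Asymptotics Filter Set Topology Finset Real

lemma hasSum_zetaR {k : ℕ} (hk : 1 < k) :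
    HasSum (fun m : ℕ => 1 / ((m : ℝ) + 1) ^ k) (zetaR k) := by
  have h_eq : zetaR k = ∑' n : ℕ, 1 / (n : ℝ) ^ k := by
    have h_cast : riemannZeta ((k : ℝ) : ℂ) = ((∑' n : ℕ, 1 / (n : ℝ) ^ k : ℝ) : ℂ) := by
      push_cast
      exact zeta_nat_eq_tsum_of_gt_one hk
    rw [zetaR, h_cast, Complex.ofReal_re]
  have h_sum : HasSum (fun n : ℕ => 1 / (n : ℝ) ^ k) (zetaR k) :=
    h_eq ▸ (Real.summable_one_div_nat_pow.mpr hk).hasSum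
  simpa [(zero_lt_one.trans hk).ne'] using (hasSum_nat_add_iff' 1).mpr h_sum

lemma zetaR_two : zetaR 2 = π ^ 2 / 6 := by
  have h := riemannZeta_two
  rw [zetaR, Complex.ofReal_ofNat, h]
  norm_cast

lemma logGammaSeq_add_log (s : ℝ) (n : ℕ) :
    BohrMollerup.logGammaSeq s n + log s =
      s * log n - ∑ m ∈ range n, (log (s + (m + 1)) - log (m + 1)) := by
  have h_factorial : log n.factorial = ∑ m ∈ range n, log ((m : ℝ) + 1) := by
    rw [← prod_range_add_one_eq_factorial, Nat.cast_prod, log_prod fun m _ => by positivity]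
    simp
  rw [BohrMollerup.logGammaSeq, sum_range_succ', h_factorial, sum_sub_distrib]
  push_cast
  rw [add_zero]
  ring

-- The logarithm of the Weierstrass product for `Γ`.
lemma hasSum_log_gamma_one_add {s : ℝ} (hs : 0 < s) :
    HasSum (fun m : ℕ => s / (m + 1) - log (1 + s / (m + 1)))
      (log (Gamma (1 + s)) + eulerMascheroniConstant * s) := by
  have h_nonneg (m : ℕ) : 0 ≤ s / (m + 1) - log (1 + s / (m + 1)) := by
    have := log_le_sub_one_of_pos (x := 1 + s / (m + 1)) (by positivity)
    linarith
  have h_gamma : log (Gamma (1 + s)) = log (Gamma s) + log s := by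
    rw [add_comm, Gamma_add_one hs.ne', log_mul hs.ne' (Gamma_pos_of_pos hs).ne', add_comm]
  have h_partial (n : ℕ) : ∑ m ∈ range n, (s / (m + 1) - log (1 + s / (m + 1))) =
      BohrMollerup.logGammaSeq s n + log s + (harmonic n - log n) * s := by
    have h_term (m : ℕ) : s / (m + 1) - log (1 + s / (m + 1)) =
        (m + 1 : ℝ)⁻¹ * s - (log (s + (m + 1)) - log (m + 1)) := by
      rw [← log_div (by positivity) (by positivity), add_div, div_self (by positivity)]
      ring_nf
    simp_rw [logGammaSeq_add_log, h_term, sum_sub_distrib, ← sum_mul]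
    push_cast [harmonic]
    ring
  rw [hasSum_iff_tendsto_nat_of_nonneg h_nonneg, h_gamma]
  simp_rw [h_partial]
  exact ((BohrMollerup.tendsto_log_gamma hs).add_const _).add
    (tendsto_harmonic_sub_log.mul_const s)

lemma abs_sub_log_one_add_sub_sum_le {t : ℝ} (h0 : 0 ≤ t) (h1 : t ≤ 1 / 2) (n : ℕ) :
    |t - log (1 + t) - ∑ k ∈ range n, (-1) ^ k / (k + 2) * t ^ (k + 2)| ≤ 2 * t ^ (n + 2) := by
  have h_log := abs_log_sub_add_sum_range_le (x := -t)
    (by rw [abs_neg, abs_of_nonneg h0]; linarith) (n + 1)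
  rw [abs_neg, abs_of_nonneg h0, sub_neg_eq_add, sum_range_succ'] at h_log
  have h_le : t ^ (n + 2) / (1 - t) ≤ 2 * t ^ (n + 2) := by
    rw [div_le_iff₀ (by linarith)]
    nlinarith [pow_nonneg h0 (n + 2)]
  rw [← abs_neg]
  refine (congrArg abs ?_).trans_le (h_log.trans h_le)
  have h_sum : ∑ k ∈ range n, (-t) ^ (k + 1 + 1) / (((k + 1 : ℕ) : ℝ) + 1) =
      ∑ k ∈ range n, (-1) ^ k / (k + 2) * t ^ (k + 2) :=
    sum_congr rfl fun k _ => by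
      rw [neg_pow]; push_cast; ring
  rw [h_sum]
  simp only [neg_sub, zero_add, pow_one, Nat.cast_zero, div_one]
  ring

lemma log_gamma_one_add_isBigO (n : ℕ) :
    (fun s => log (Gamma (1 + s)) + eulerMascheroniConstant * s -
        ∑ k ∈ range n, (-1) ^ k / (k + 2) * zetaR ((k + 2 : ℕ) : ℝ) * s ^ (k + 2))
      =O[𝓝[>] 0] (fun s => s ^ (n + 2)) := by
  refine IsBigO.of_bound (2 * zetaR ((n + 2 : ℕ) : ℝ)) ?_
  filter_upwards [Ioc_mem_nhdsGT (show (0 : ℝ) < 1 / 2 by norm_num)] with s ⟨hs0, hs1⟩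
  have h_zeta (k : ℕ) := (hasSum_zetaR (k := k + 2) (by omega))
  have h_sum := (hasSum_log_gamma_one_add hs0).sub (hasSum_sum fun k (_ : k ∈ range n) =>
    ((h_zeta k).mul_left ((-1 : ℝ) ^ k / (k + 2))).mul_right (s ^ (k + 2)))
  rw [norm_of_nonneg (by positivity : 0 ≤ s ^ (n + 2))]
  refine h_sum.norm_le_of_bounded (((h_zeta n).mul_left 2).mul_right (s ^ (n + 2))) fun m => ?_
  have h_quot : s / (m + 1) ≤ 1 / 2 := (div_le_self hs0.le (by simp)).trans hs1
  convert abs_sub_log_one_add_sub_sum_le (by positivity) h_quot n using 1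
  · simp_rw [div_pow, mul_one_div, Real.norm_eq_abs]
    congr! 3
    ring
  · rw [div_pow]; ring

lemma log_gamma_one_add_mul_isBigO {a : ℝ} (ha : 0 < a) :
    (fun s => log (Gamma (1 + a * s)) - (-eulerMascheroniConstant * a * s +
        π ^ 2 / 12 * a ^ 2 * s ^ 2 - zetaR 3 / 3 * a ^ 3 * s ^ 3))
      =O[𝓝[>] 0] (fun s => s ^ 4) := by
  have h_tendsto : Tendsto (fun s => a * s) (𝓝[>] 0) (𝓝[>] 0) := by
    simpa only [comap_mulLeft_nhdsGT_zero ha] using tendsto_comap (f := (a * ·)) (x := 𝓝[>] 0)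
  have h_pow : (fun s : ℝ => (a * s) ^ (2 + 2)) =O[𝓝[>] 0] (fun s => s ^ 4) := by
    simp_rw [mul_pow]
    exact isBigO_const_mul_self (a ^ 4) _ _
  refine (((log_gamma_one_add_isBigO 2).comp_tendsto h_tendsto).trans h_pow).congr_left fun s => ?_
  norm_num [sum_range_succ, zetaR_two]
  ring

end LogGamma

section Mellin

open Complex Filter Set Topology

lemma norm_cpow_mul_cexp_neg_mul {t : ℝ} (ht : 0 < t) (a z : ℂ) :
    ‖(t : ℂ) ^ a * cexp (-(z * t))‖ = t ^ a.re * Real.exp (-z.re * t) := by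
  rw [norm_mul, norm_cpow_eq_rpow_re_of_pos ht, norm_exp]
  simp

lemma mellinConvergent_cexp_neg_mul {s z : ℂ} (hs : 0 < s.re) (hz : 0 < z.re) :
    MellinConvergent (fun t : ℝ => cexp (-(z * t))) s := by
  have h_bound := integrableOn_rpow_mul_exp_neg_mul_rpow (p := 1) (s := s.re - 1) (b := z.re)
    (by linarith) one_pos hz
  refine h_bound.mono' ?_ ?_
  · exact (Measurable.aestronglyMeasurable (by fun_prop))
  · filter_upwards [ae_restrict_mem measurableSet_Ioi] with t ht
    rw [smul_eq_mul, norm_cpow_mul_cexp_neg_mul ht]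
    simp

lemma differentiableAt_mellin_cexp_neg_mul {s z : ℂ} (hs : 0 < s.re) (hz : 0 < z.re) :
    DifferentiableAt ℂ (fun z : ℂ => mellin (fun t : ℝ => cexp (-(z * t))) s) z := by
  have h_dom : IntegrableOn (fun t : ℝ => t ^ s.re * Real.exp (-(z.re / 2) * t)) (Ioi 0) := by
    simpa using integrableOn_rpow_mul_exp_neg_mul_rpow (p := 1) (s := s.re) (b := z.re / 2)
      (by linarith) one_pos (half_pos hz)
  have h_nhds : {y : ℂ | z.re / 2 < y.re} ∈ 𝓝 z :=
    (isOpen_lt continuous_const continuous_re).mem_nhds (half_lt_self hz)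
  refine (hasDerivAt_integral_of_dominated_loc_of_deriv_le h_nhds
    (μ := volume.restrict (Ioi 0)) (F := fun y (t : ℝ) => (t : ℂ) ^ (s - 1) • cexp (-(y * t)))
    (F' := fun y (t : ℝ) => (t : ℂ) ^ (s - 1) • (cexp (-(y * t)) * -t)) (.of_forall fun y => ?_)
    (mellinConvergent_cexp_neg_mul hs hz) ?_ ?_ h_dom ?_).2.differentiableAt
  · exact Measurable.aestronglyMeasurable (by fun_prop)
  · exact Measurable.aestronglyMeasurable (by fun_prop)
  · filter_upwards [ae_restrict_mem measurableSet_Ioi] with t (ht : 0 < t) y hy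
    have h_cpow :
        (t : ℂ) ^ (s - 1) • (cexp (-(y * t)) * -t) = -((t : ℂ) ^ s * cexp (-(y * t))) := by
      rw [cpow_sub _ _ (ofReal_ne_zero.mpr ht.ne'), cpow_one, smul_eq_mul]
      field [ofReal_ne_zero.mpr ht.ne']
    rw [h_cpow, norm_neg, norm_cpow_mul_cexp_neg_mul ht]
    have := hy.le
    gcongr
  · refine .of_forall fun t y _ => HasDerivAt.fun_const_smul _ ?_
    simpa using (((hasDerivAt_id y).mul_const (t : ℂ)).neg).cexp

lemma mellin_cexp_neg_mul {s z : ℂ} (hs : 0 < s.re) (hz : 0 < z.re) :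
    mellin (fun t : ℝ => cexp (-(z * t))) s = Gamma s * z ^ (-s) := by
  have h_open : IsOpen {y : ℂ | 0 < y.re} := isOpen_lt continuous_const continuous_re
  have h_left : AnalyticOnNhd ℂ (fun y : ℂ => mellin (fun t : ℝ => cexp (-(y * t))) s)
      {y | 0 < y.re} := DifferentiableOn.analyticOnNhd (fun y hy =>
    (differentiableAt_mellin_cexp_neg_mul hs hy).differentiableWithinAt) h_open
  have h_right : AnalyticOnNhd ℂ (fun y : ℂ => Gamma s * y ^ (-s)) {y | 0 < y.re} :=
    DifferentiableOn.analyticOnNhd (fun y hy =>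
      ((differentiableAt_id.cpow_const (.inl hy)).const_mul _).differentiableWithinAt) h_open
  have h_real {r : ℝ} (hr : 0 < r) :
      mellin (fun t : ℝ => cexp (-(r * t))) s = Gamma s * (r : ℂ) ^ (-s) := by
    have h_arg : (r : ℂ).arg ≠ Real.pi := by
      rw [arg_ofReal_of_nonneg hr.le]; exact Real.pi_pos.ne
    simp_rw [mellin, smul_eq_mul, integral_cpow_mul_exp_neg_mul_Ioi hs hr, one_div,
      inv_cpow _ _ h_arg, cpow_neg]
    ring
  have h_frequently : ∃ᶠ y in 𝓝[≠] (1 : ℂ),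
      mellin (fun t : ℝ => cexp (-(y * t))) s = Gamma s * y ^ (-s) := by
    have h_tendsto : Tendsto ((↑) : ℝ → ℂ) (𝓝[≠] 1) (𝓝[≠] 1) :=
      tendsto_nhdsWithin_of_tendsto_nhds_of_eventually_within _
        (continuous_ofReal.tendsto' 1 1 ofReal_one |>.mono_left nhdsWithin_le_nhds)
        (eventually_mem_nhdsWithin.mono fun r hr => by simpa using hr)
    have h_pos : ∀ᶠ r : ℝ in 𝓝[≠] 1, 0 < r := nhdsWithin_le_nhds (lt_mem_nhds one_pos)
    exact h_tendsto.frequently (h_pos.mono fun r hr => h_real hr).frequently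
  exact h_left.eqOn_of_preconnected_of_frequently_eq h_right
    (convex_halfSpace_re_gt 0).isPreconnected (by simp) h_frequently hz

lemma mellinConvergent_cexp_neg_mul_rpow {α : ℝ} (hα : 0 < α) {s z : ℂ} (hs : 0 < s.re)
    (hz : 0 < z.re) : MellinConvergent (fun t : ℝ => cexp (-(z * (t ^ α : ℝ)))) s := by
  refine (MellinConvergent.comp_rpow (f := fun t : ℝ => cexp (-(z * t))) hα.ne').mpr
    (mellinConvergent_cexp_neg_mul ?_ hz)
  rw [div_ofReal_re]; positivity

lemma mellin_cexp_neg_mul_rpow {α : ℝ} (hα : 0 < α) {s z : ℂ} (hs : 0 < s.re) (hz : 0 < z.re) :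
    mellin (fun t : ℝ => cexp (-(z * (t ^ α : ℝ)))) s =
      (α⁻¹ : ℝ) * (Gamma (s / α) * z ^ (-(s / α))) := by
  have hs' : 0 < (s / α).re := by rw [div_ofReal_re]; positivity
  rw [mellin_comp_rpow (fun t : ℝ => cexp (-(z * t))), abs_of_pos hα,
    mellin_cexp_neg_mul hs' hz, real_smul]

lemma norm_cexp_neg_mul_le_one {ε t : ℝ} (hε : 0 ≤ ε) (ht : 0 ≤ t) : ‖cexp (-(ε * t))‖ ≤ 1 := by
  rw [norm_exp]
  simpa using mul_nonneg hε ht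

lemma norm_mellin_cexp_neg_mul_mul_le {f : ℝ → ℂ} {s : ℂ} (hf : MellinConvergent f s) {ε : ℝ}
    (hε : 0 ≤ ε) :
    ‖mellin (fun t => cexp (-(ε * t)) * f t) s‖ ≤
      ∫ t in Ioi (0 : ℝ), ‖(t : ℂ) ^ (s - 1) • f t‖ := by
  refine norm_integral_le_of_norm_le hf.norm ?_
  filter_upwards [ae_restrict_mem measurableSet_Ioi] with t (ht : 0 < t)
  rw [norm_smul, norm_smul, norm_mul]
  gcongr
  exact mul_le_of_le_one_left (norm_nonneg _) (norm_cexp_neg_mul_le_one hε ht.le)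

lemma tendsto_mellin_cexp_neg_mul_mul {f : ℝ → ℂ} {s : ℂ} (hf : MellinConvergent f s) :
    Tendsto (fun ε : ℝ => mellin (fun t => cexp (-(ε * t)) * f t) s) (𝓝[>] 0) (𝓝 (mellin f s)) := by
  refine tendsto_integral_filter_of_dominated_convergence _ ?_ ?_ hf.norm ?_
  · refine .of_forall fun ε => ?_
    have h_meas : Measurable fun t : ℝ => cexp (-(ε * t)) := by fun_prop
    exact (h_meas.aestronglyMeasurable.mul hf.aestronglyMeasurable).congr
      (.of_forall fun t => mul_left_comm _ _ _)
  · filter_upwards [self_mem_nhdsWithin] with ε (hε : 0 < ε)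
    filter_upwards [ae_restrict_mem measurableSet_Ioi] with t (ht : 0 < t)
    rw [norm_smul, norm_smul, norm_mul]
    gcongr
    exact mul_le_of_le_one_left (norm_nonneg _) (norm_cexp_neg_mul_le_one hε.le ht.le)
  · refine .of_forall fun t => tendsto_nhdsWithin_of_tendsto_nhds ?_
    have h_cont : Continuous fun ε : ℝ => (t : ℂ) ^ (s - 1) • (cexp (-(ε * t)) * f t) := by fun_prop
    simpa using h_cont.tendsto 0

end Mellin

section CharFun

open Complex Filter Set Topology

lemma cos_mul_rpow_norm_le_re_cpow {z : ℂ} (hz : 0 ≤ z.re) {s : ℝ} (hs0 : 0 ≤ s) (hs2 : s ≤ 2) :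
    Real.cos (Real.pi / 2 * s) * ‖z‖ ^ (-s) ≤ (z ^ (-s : ℂ)).re := by
  have h_arg : |arg z * -s| ≤ Real.pi / 2 * s := by
    rw [abs_mul, abs_neg, abs_of_nonneg hs0]
    gcongr
    exact abs_arg_le_pi_div_two_iff.mpr hz
  rw [← ofReal_neg, cpow_ofReal_re, mul_comm, ← Real.cos_abs (arg z * -s)]
  gcongr
  exact Real.cos_le_cos_of_nonneg_of_le_pi (abs_nonneg _) (by nlinarith [Real.pi_pos]) h_arg

lemma re_neg_mul_I_cpow {x : ℝ} (hx : x ≠ 0) (s : ℝ) :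
    ((-(x * I)) ^ (-s : ℂ)).re = Real.cos (Real.pi / 2 * s) * |x| ^ (-s) := by
  have h_arg : arg (-(x * I)) = Real.pi / 2 ∨ arg (-(x * I)) = -(Real.pi / 2) := by
    rw [arg_eq_pi_div_two_iff, arg_eq_neg_pi_div_two_iff]
    simpa using hx.lt_or_gt
  rw [← ofReal_neg, cpow_ofReal_re]
  rcases h_arg with h | h <;> rw [h] <;> simp [mul_comm]

lemma norm_neg_mul_I_cpow (x s : ℝ) : ‖(-(x * I)) ^ (-s : ℂ)‖ = |x| ^ (-s) := by
  rw [← ofReal_neg, norm_cpow_real]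
  simp

lemma tendsto_sub_mul_I_cpow {x : ℝ} (hx : x ≠ 0) (a : ℂ) :
    Tendsto (fun ε : ℝ => (ε - x * I) ^ a) (𝓝 0) (𝓝 ((-(x * I)) ^ a)) := by
  have h_slit : ((0 : ℝ) - x * I : ℂ) ∈ slitPlane := .inr (by simpa using hx)
  have h_cont : ContinuousAt (fun ε : ℝ => (ε - x * I) ^ a) 0 :=
    ContinuousAt.cpow (by fun_prop) continuousAt_const h_slit
  simpa [ContinuousAt] using h_cont

variable {μ : Measure ℝ} [IsFiniteMeasure μ]

lemma mellin_cexp_neg_mul_mul_charFun {s : ℂ} (hs : 0 < s.re) {ε : ℝ} (hε : 0 < ε) :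
    mellin (fun t => cexp (-(ε * t)) * charFun μ t) s =
      Gamma s * ∫ x, (ε - x * I) ^ (-s) ∂μ := by
  let F : ℝ → ℝ → ℂ := fun t x => (t : ℂ) ^ (s - 1) * cexp (-((ε - x * I) * t))
  have h_int : Integrable (Function.uncurry F) ((volume.restrict (Ioi 0)).prod μ) := by
    have h_fst := (mellinConvergent_cexp_neg_mul (z := ε) hs (by simpa)).norm.comp_fst μ
    refine h_fst.mono' (Measurable.aestronglyMeasurable (by unfold F; fun_prop)) ?_
    refine .of_forall fun p => le_of_eq ?_
    simp only [F, Function.uncurry, norm_smul, norm_mul, norm_exp]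
    simp
  have h_inner (t : ℝ) : (t : ℂ) ^ (s - 1) • (cexp (-(ε * t)) * charFun μ t) = ∫ x, F t x ∂μ := by
    rw [charFun_apply_real, smul_eq_mul, ← mul_assoc, ← integral_const_mul]
    refine integral_congr_ae (.of_forall fun x => ?_)
    simp only [F]
    rw [mul_assoc, ← exp_add]
    ring_nf
  have h_outer (x : ℝ) : ∫ t in Ioi 0, F t x = Gamma s * (ε - x * I) ^ (-s) :=
    mellin_cexp_neg_mul hs (by simpa)
  simp_rw [mellin, h_inner]
  rw [integral_integral_swap h_int]
  simp_rw [h_outer, integral_const_mul]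

variable {s : ℝ}

lemma abs_le_norm_sub_mul_I (ε x : ℝ) : |x| ≤ ‖(ε - x * I : ℂ)‖ := by
  simpa using abs_im_le_norm (ε - x * I : ℂ)

lemma integrable_sub_mul_I_cpow (hs : 0 ≤ s) {ε : ℝ} (hε : 0 < ε) :
    Integrable (fun x : ℝ => (ε - x * I : ℂ) ^ (-s : ℂ)) μ := by
  refine (integrable_const (ε ^ (-s))).mono' (Measurable.aestronglyMeasurable (by fun_prop)) ?_
  refine .of_forall fun x => ?_
  have h_re : ε ≤ ‖(ε - x * I : ℂ)‖ := by
    simpa [abs_of_pos hε] using abs_re_le_norm (ε - x * I : ℂ)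
  rw [← ofReal_neg, norm_cpow_real]
  exact Real.rpow_le_rpow_of_nonpos hε h_re (by linarith)

lemma gamma_mul_cos_mul_integral_norm_sub_mul_I_cpow_le (hs0 : 0 < s) (hs2 : s ≤ 2)
    (h_conv : MellinConvergent (charFun μ) s) {ε : ℝ} (hε : 0 < ε) :
    Real.Gamma s * Real.cos (Real.pi / 2 * s) * ∫ x, ‖(ε - x * I : ℂ) ^ (-s : ℂ)‖ ∂μ ≤
      ∫ t in Ioi (0 : ℝ), ‖(t : ℂ) ^ ((s : ℂ) - 1) • charFun μ t‖ := by
  have h_int := integrable_sub_mul_I_cpow (μ := μ) hs0.le hε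
  have h_re : Real.cos (Real.pi / 2 * s) * ∫ x, ‖(ε - x * I : ℂ) ^ (-s : ℂ)‖ ∂μ ≤
      (∫ x, (ε - x * I : ℂ) ^ (-s : ℂ) ∂μ).re := by
    rw [← integral_const_mul, ← reCLM_apply, ← reCLM.integral_comp_comm h_int]
    refine integral_mono (h_int.norm.const_mul _) h_int.re fun x => ?_
    simp only [← ofReal_neg, norm_cpow_real]
    simpa using cos_mul_rpow_norm_le_re_cpow (z := ε - x * I) (by simpa using hε.le) hs0.le hs2
  calc Real.Gamma s * Real.cos (Real.pi / 2 * s) * ∫ x, ‖(ε - x * I : ℂ) ^ (-s : ℂ)‖ ∂μ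
      ≤ Real.Gamma s * (∫ x, (ε - x * I : ℂ) ^ (-s : ℂ) ∂μ).re := by
        rw [mul_assoc]
        exact mul_le_mul_of_nonneg_left h_re (Real.Gamma_pos_of_pos hs0).le
    _ = (mellin (fun t => cexp (-(ε * t)) * charFun μ t) s).re := by
        rw [mellin_cexp_neg_mul_mul_charFun (by simpa) hε, Gamma_ofReal, re_ofReal_mul]
    _ ≤ ∫ t in Ioi (0 : ℝ), ‖(t : ℂ) ^ ((s : ℂ) - 1) • charFun μ t‖ :=
        (re_le_norm _).trans (norm_mellin_cexp_neg_mul_mul_le h_conv hε.le)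

-- Fatou's lemma along `ε = 1 / (n + 1)`, with the uniform bound of the preceding lemma.
lemma integrable_abs_rpow_neg (h0 : ∀ᵐ x ∂μ, x ≠ 0) (hs0 : 0 < s) (hs1 : s < 1)
    (h_conv : MellinConvergent (charFun μ) s) : Integrable (fun x => |x| ^ (-s)) μ := by
  have h_cos : 0 < Real.cos (Real.pi / 2 * s) :=
    Real.cos_pos_of_mem_Ioo ⟨by nlinarith [Real.pi_pos], by nlinarith [Real.pi_pos]⟩
  have h_pos : 0 < Real.Gamma s * Real.cos (Real.pi / 2 * s) :=
    mul_pos (Real.Gamma_pos_of_pos hs0) h_cos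
  set B := (∫ t in Ioi (0 : ℝ), ‖(t : ℂ) ^ ((s : ℂ) - 1) • charFun μ t‖) /
    (Real.Gamma s * Real.cos (Real.pi / 2 * s)) with hB
  have h_bound {ε : ℝ} (hε : 0 < ε) : ∫ x, ‖(ε - x * I : ℂ) ^ (-s : ℂ)‖ ∂μ ≤ B := by
    rw [hB, le_div_iff₀' h_pos]
    exact gamma_mul_cos_mul_integral_norm_sub_mul_I_cpow_le hs0 (by linarith) h_conv hε
  have h_eps (n : ℕ) : (0 : ℝ) < 1 / (n + 1) := by positivity
  have h_int (n : ℕ) := (integrable_sub_mul_I_cpow (μ := μ) hs0.le (h_eps n)).norm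
  refine integrable_of_tendsto ?_ (fun n => (h_int n).aestronglyMeasurable) ?_
  · filter_upwards [h0] with x hx
    rw [← norm_neg_mul_I_cpow]
    exact (tendsto_sub_mul_I_cpow hx _).norm.comp tendsto_one_div_add_atTop_nhds_zero_nat
  · refine ne_top_of_le_ne_top ENNReal.ofReal_ne_top (liminf_le_of_le (by isBoundedDefault)
      fun b hb => ?_) (b := ENNReal.ofReal B)
    obtain ⟨n, hn⟩ := hb.exists
    refine hn.trans ?_
    rw [← ofReal_integral_norm_eq_lintegral_enorm (h_int n)]
    simp_rw [norm_norm]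
    exact ENNReal.ofReal_le_ofReal (h_bound (h_eps n))

lemma mellin_charFun (h0 : ∀ᵐ x ∂μ, x ≠ 0) (hs0 : 0 < s) (hs1 : s < 1)
    (h_conv : MellinConvergent (charFun μ) s) :
    mellin (charFun μ) s = Gamma s * ∫ x, (-(x * I) : ℂ) ^ (-s : ℂ) ∂μ := by
  refine tendsto_nhds_unique (tendsto_mellin_cexp_neg_mul_mul h_conv) ?_
  have h_lim : Tendsto (fun ε : ℝ => ∫ x, (ε - x * I : ℂ) ^ (-s : ℂ) ∂μ) (𝓝[>] 0)
      (𝓝 (∫ x, (-(x * I) : ℂ) ^ (-s : ℂ) ∂μ)) := by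
    refine tendsto_integral_filter_of_dominated_convergence (fun x => |x| ^ (-s))
      (.of_forall fun ε => Measurable.aestronglyMeasurable (by fun_prop)) ?_
      (integrable_abs_rpow_neg h0 hs0 hs1 h_conv) ?_
    · refine .of_forall fun ε => ?_
      filter_upwards [h0] with x hx
      rw [← ofReal_neg, norm_cpow_real]
      exact Real.rpow_le_rpow_of_nonpos (abs_pos.mpr hx) (abs_le_norm_sub_mul_I ε x) (by linarith)
    · filter_upwards [h0] with x hx
      exact (tendsto_sub_mul_I_cpow hx _).mono_left nhdsWithin_le_nhds
  refine (h_lim.const_mul _).congr' ?_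
  filter_upwards [self_mem_nhdsWithin] with ε (hε : 0 < ε)
  rw [mellin_cexp_neg_mul_mul_charFun (by simpa) hε]

lemma re_mellin_charFun (h0 : ∀ᵐ x ∂μ, x ≠ 0) (hs0 : 0 < s) (hs1 : s < 1)
    (h_conv : MellinConvergent (charFun μ) s) :
    (mellin (charFun μ) s).re =
      Real.Gamma s * Real.cos (Real.pi / 2 * s) * ∫ x, |x| ^ (-s) ∂μ := by
  have h_int : Integrable (fun x : ℝ => (-(x * I) : ℂ) ^ (-s : ℂ)) μ := by
    refine (integrable_abs_rpow_neg h0 hs0 hs1 h_conv).mono'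
      (Measurable.aestronglyMeasurable (by fun_prop)) (.of_forall fun x => ?_)
    rw [norm_neg_mul_I_cpow]
  rw [mellin_charFun h0 hs0 hs1 h_conv, Gamma_ofReal, re_ofReal_mul, ← reCLM_apply,
    ← reCLM.integral_comp_comm h_int, mul_assoc,
    ← integral_const_mul (Real.cos _)]
  refine congrArg (Real.Gamma s * ·) (integral_congr_ae ?_)
  filter_upwards [h0] with x hx using re_neg_mul_I_cpow hx s

end CharFun

section StableLaw

open Complex Set

variable {α θ τ : ℝ}

/-- The scale `w` of a strictly stable law of index `α = ν ^ (-1/2)`: the characteristic function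
of the law is `exp (-w * k ^ α)` for `k > 0`. -/
noncomputable def stableScale (α θ τ : ℝ) : ℂ :=
  cexp ((α * τ + Real.eulerMascheroniConstant * (α - 1) : ℝ) - (Real.pi / 2 * (α * θ) : ℝ) * I)

lemma re_stableScale_pos (h : |α * θ| < 1) : 0 < (stableScale α θ τ).re := by
  obtain ⟨h_lower, h_upper⟩ := abs_lt.mp h
  have h_cos : 0 < Real.cos (Real.pi / 2 * (α * θ)) := Real.cos_pos_of_mem_Ioo
    ⟨by nlinarith [Real.pi_pos], by nlinarith [Real.pi_pos]⟩
  simpa [stableScale, exp_re] using mul_pos (Real.exp_pos _) h_cos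

lemma re_stableScale_cpow_neg (hα : α ≠ 0) (h : |α * θ| < 2) (s : ℝ) :
    (stableScale α θ τ ^ (-(s / α) : ℂ)).re =
      Real.exp (-(τ + Real.eulerMascheroniConstant * (1 - α⁻¹)) * s) *
        Real.cos (Real.pi / 2 * θ * s) := by
  obtain ⟨h_lower, h_upper⟩ := abs_lt.mp h
  have hα' : (α : ℂ) ≠ 0 := ofReal_ne_zero.mpr hα
  have h_exponent : ((α * τ + Real.eulerMascheroniConstant * (α - 1) : ℝ) -
      (Real.pi / 2 * (α * θ) : ℝ) * I : ℂ) * -(s / α) =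
      (-(τ + Real.eulerMascheroniConstant * (1 - α⁻¹)) * s : ℝ) +
        (Real.pi / 2 * θ * s : ℝ) * I := by
    push_cast
    field
  rw [stableScale, cpow_def_of_ne_zero (exp_ne_zero _), log_exp, h_exponent, exp_re]
  · simp
  all_goals simp only [sub_im, ofReal_im, im_ofReal_mul, I_im]; nlinarith [Real.pi_pos]

section NegativeMoments

variable {μ : Measure ℝ} {w : ℂ} {s : ℝ}

lemma mellinConvergent_charFun_of_eq_cexp (hα : 0 < α) (hw : 0 < w.re)
    (hφ : ∀ k : ℝ, 0 < k → charFun μ k = cexp (-(w * (k ^ α : ℝ)))) (hs : 0 < s) :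
    MellinConvergent (charFun μ) s := by
  refine IntegrableOn.congr_fun (mellinConvergent_cexp_neg_mul_rpow (s := s) hα (by simpa) hw)
    (fun k hk => ?_) measurableSet_Ioi
  simp only [hφ k hk]

lemma mellin_charFun_of_eq_cexp (hα : 0 < α) (hw : 0 < w.re)
    (hφ : ∀ k : ℝ, 0 < k → charFun μ k = cexp (-(w * (k ^ α : ℝ)))) (hs : 0 < s) :
    mellin (charFun μ) s = (α⁻¹ : ℝ) * (Gamma (s / α) * w ^ (-(s / α) : ℂ)) := by
  rw [← mellin_cexp_neg_mul_rpow (s := s) hα (by simpa) hw]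
  refine setIntegral_congr_fun measurableSet_Ioi fun k hk => ?_
  simp only [hφ k hk]

lemma integral_abs_rpow_neg_of_charFun_eq_cexp [IsFiniteMeasure μ] (h0 : ∀ᵐ x ∂μ, x ≠ 0)
    (hα : 0 < α) (hw : 0 < w.re)
    (hφ : ∀ k : ℝ, 0 < k → charFun μ k = cexp (-(w * (k ^ α : ℝ)))) (hs0 : 0 < s) (hs1 : s < 1) :
    ∫ x, |x| ^ (-s) ∂μ = Real.Gamma (1 + α⁻¹ * s) / Real.Gamma (1 + s) *
      (w ^ (-(s / α) : ℂ)).re / Real.cos (Real.pi / 2 * s) := by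
  have h_conv := mellinConvergent_charFun_of_eq_cexp hα hw hφ hs0
  have h_mellin := re_mellin_charFun h0 hs0 hs1 h_conv
  have h_cos : 0 < Real.cos (Real.pi / 2 * s) :=
    Real.cos_pos_of_mem_Ioo ⟨by nlinarith [Real.pi_pos], by nlinarith [Real.pi_pos]⟩
  have h_gamma : 0 < Real.Gamma s := Real.Gamma_pos_of_pos hs0
  rw [mellin_charFun_of_eq_cexp hα hw hφ hs0, ← ofReal_div, Gamma_ofReal, re_ofReal_mul,
    re_ofReal_mul] at h_mellin
  rw [add_comm, add_comm 1 s, Real.Gamma_add_one (by positivity), Real.Gamma_add_one hs0.ne',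
    inv_mul_eq_div, ← ofReal_div, eq_div_iff h_cos.ne']
  field_simp
  field_simp at h_mellin
  linarith

end NegativeMoments

end StableLaw

section CumulantExpansion

open Asymptotics Filter Topology Real

lemma log_cos_mul_isBigO (a : ℝ) :
    (fun s : ℝ => log (cos (a * s)) + a ^ 2 / 2 * s ^ 2) =O[𝓝[>] 0] (fun s => s ^ 4) := by
  have h_tendsto : Tendsto (fun s : ℝ => a * s) (𝓝[>] 0) (𝓝 0) :=
    ((continuous_const_mul a).tendsto' 0 0 (mul_zero a)).mono_left nhdsWithin_le_nhds
  refine ((log_cos_add_sq_isBigO.comp_tendsto h_tendsto).congr (fun s => ?_) fun s => ?_).trans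
    (isBigO_const_mul_self (a ^ 4) _ _)
  · simp only [Function.comp_apply]; ring
  · simp only [Function.comp_apply]; ring

lemma log_gamma_add_log_cos_isBigO {β : ℝ} (hβ : 0 < β) (θ τ : ℝ) :
    (fun s => log (Gamma (1 + β * s)) - log (Gamma (1 + s)) -
        (τ + eulerMascheroniConstant * (1 - β)) * s +
        log (cos (π / 2 * θ * s)) - log (cos (π / 2 * s)) -
      (-τ * s + (π ^ 2 / 4 * (1 - θ ^ 2) + π ^ 2 / 6 * (β ^ 2 - 1)) / 2 * s ^ 2 +
        -2 * zetaR 3 * (β ^ 3 - 1) / 6 * s ^ 3)) =O[𝓝[>] 0] (fun s => s ^ 4) := by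
  have h_sum := (((log_gamma_one_add_mul_isBigO hβ).sub
    (log_gamma_one_add_mul_isBigO one_pos)).add (log_cos_mul_isBigO (π / 2 * θ))).sub
    (log_cos_mul_isBigO (π / 2))
  refine h_sum.congr_left fun s => ?_
  simp only [one_mul]
  ring

end CumulantExpansion

section LogMoments

open Filter Set Topology Real

variable {μ : Measure ℝ} {α θ τ : ℝ}

lemma exp_mul_neg_log_abs {x : ℝ} (hx : x ≠ 0) (s : ℝ) : exp (s * -log |x|) = |x| ^ (-s) := by
  rw [rpow_def_of_pos (abs_pos.mpr hx)]
  ring_nf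

lemma mgf_neg_log_abs (h0 : ∀ᵐ x ∂μ, x ≠ 0) (s : ℝ) :
    mgf (fun x => -log |x|) μ s = ∫ x, |x| ^ (-s) ∂μ :=
  integral_congr_ae (h0.mono fun _ hx => exp_mul_neg_log_abs hx s)

lemma cgf_neg_log_abs_of_charFun_eq_stableScale [IsFiniteMeasure μ] (h0 : ∀ᵐ x ∂μ, x ≠ 0)
    (hα : 0 < α) (hαθ : |α * θ| < 1) (hθ : |θ| ≤ 1)
    (hφ : ∀ k : ℝ, 0 < k → charFun μ k = Complex.exp (-(stableScale α θ τ * (k ^ α : ℝ))))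
    {s : ℝ} (hs0 : 0 < s) (hs1 : s < 1) :
    cgf (fun x => -log |x|) μ s =
      log (Gamma (1 + α⁻¹ * s)) - log (Gamma (1 + s)) -
        (τ + eulerMascheroniConstant * (1 - α⁻¹)) * s +
        log (cos (π / 2 * θ * s)) - log (cos (π / 2 * s)) := by
  have h_cos {a : ℝ} (ha : |a| ≤ 1) : cos (π / 2 * a * s) ≠ 0 := by
    have h_abs : |a * s| < 1 := by
      rw [abs_mul, abs_of_pos hs0]
      exact mul_lt_one_of_nonneg_of_lt_one_right ha hs0.le hs1
    obtain ⟨h_lower, h_upper⟩ := abs_lt.mp h_abs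
    exact (cos_pos_of_mem_Ioo ⟨by nlinarith [pi_pos], by nlinarith [pi_pos]⟩).ne'
  have h_cos_one : cos (π / 2 * s) ≠ 0 := by simpa using h_cos (a := 1) (by simp)
  rw [cgf, mgf_neg_log_abs h0, integral_abs_rpow_neg_of_charFun_eq_cexp h0 hα
    (re_stableScale_pos hαθ) hφ hs0 hs1, re_stableScale_cpow_neg hα.ne' (hαθ.trans one_lt_two)]
  have h_gamma_pos {a : ℝ} (ha : 0 < a) : Gamma (1 + a * s) ≠ 0 :=
    (Gamma_pos_of_pos (by positivity)).ne'
  have h_gamma := h_gamma_pos (inv_pos.mpr hα)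
  have h_gamma_one : Gamma (1 + s) ≠ 0 := by simpa using h_gamma_pos one_pos
  rw [log_div (by simp [*, exp_ne_zero]) h_cos_one, log_mul (by simp [*]) (by simp [*]),
    log_div h_gamma h_gamma_one, log_mul (exp_ne_zero _) (h_cos hθ), log_exp]
  ring

lemma integral_log_abs_pow_three_of_charFun_eq_stableScale [IsProbabilityMeasure μ]
    (h0 : ∀ᵐ x ∂μ, x ≠ 0) (h_log : MemLp (fun x => log |x|) 4 μ)
    (hα : 0 < α) (hαθ : |α * θ| < 1) (hθ : |θ| ≤ 1)
    (hφ : ∀ k : ℝ, 0 < k → charFun μ k = Complex.exp (-(stableScale α θ τ * (k ^ α : ℝ)))) :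
    ∫ x, log |x| ^ 3 ∂μ =
      τ ^ 3 + 3 * τ * (π ^ 2 / 4 * (1 - θ ^ 2) + π ^ 2 / 6 * (α⁻¹ ^ 2 - 1)) +
        2 * zetaR 3 * (α⁻¹ ^ 3 - 1) := by
  have h_exp : Integrable (fun x => exp (1 / 2 * -log |x|)) μ :=
    (integrable_abs_rpow_neg h0 one_half_pos one_half_lt_one
      (mellinConvergent_charFun_of_eq_cexp hα (re_stableScale_pos hαθ) hφ one_half_pos)).congr
      (h0.mono fun x hx => (exp_mul_neg_log_abs hx _).symm)
  have h_cgf := (log_gamma_add_log_cos_isBigO (inv_pos.mpr hα) θ τ).congr' (by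
    filter_upwards [Ioo_mem_nhdsGT one_pos] with s hs
    rw [← cgf_neg_log_abs_of_charFun_eq_stableScale h0 hα hαθ hθ hφ hs.1 hs.2]) .rfl
  have h_moment := moment_three_eq_of_cgf_isBigO one_half_pos h_exp h_log.neg h_cgf
  have h_neg : moment (fun x => -log |x|) 3 μ = -∫ x, log |x| ^ 3 ∂μ := by
    rw [moment, ← integral_neg]
    congr with x
    simp [Odd.neg_pow (by decide : Odd 3)]
  rw [← neg_eq_iff_eq_neg.mpr h_neg, h_moment]
  ring

lemma eq_dirac_of_charFun_eq_cexp [IsProbabilityMeasure μ] {c : ℝ}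
    (hφ : ∀ k : ℝ, 0 < k → charFun μ k = Complex.exp (k * c * Complex.I)) :
    μ = Measure.dirac c := by
  refine Measure.ext_of_charFun (funext fun k => ?_)
  have h_pos {k : ℝ} (hk : 0 < k) : charFun μ k = charFun (Measure.dirac c) k := by
    rw [hφ k hk, charFun_dirac]
    simp [mul_comm]
  rcases lt_trichotomy k 0 with hk | rfl | hk
  · rw [← neg_neg k, charFun_neg (-k), h_pos (neg_pos.mpr hk), ← charFun_neg]
  · simp
  · exact h_pos hk

lemma neg_stableScale_one (hθ : |θ| = 1) : -stableScale 1 θ τ = (θ * exp τ : ℝ) * Complex.I := by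
  have h_polar : stableScale 1 θ τ =
      Complex.exp τ * Complex.exp (-(θ * (π / 2 * Complex.I))) := by
    rw [stableScale, ← Complex.exp_add]
    push_cast
    ring_nf
  rcases (abs_eq zero_le_one).mp hθ with rfl | rfl <;>
    simp [h_polar, Complex.exp_neg, Complex.exp_pi_div_two_mul_I]

lemma integral_log_abs_pow_of_charFun_eq_stableScale_one [IsProbabilityMeasure μ] (hθ : |θ| = 1)
    (hφ : ∀ k : ℝ, 0 < k → charFun μ k = Complex.exp (-(stableScale 1 θ τ * k)))
    (n : ℕ) : ∫ x, log |x| ^ n ∂μ = τ ^ n := by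
  have h_dirac : μ = Measure.dirac (θ * exp τ) := by
    refine eq_dirac_of_charFun_eq_cexp fun k hk => ?_
    rw [hφ k hk, ← neg_mul, neg_stableScale_one hθ]
    push_cast
    ring_nf
  rw [h_dirac, integral_dirac, abs_mul, hθ, one_mul, abs_exp, log_exp]

end LogMoments

namespace IsStrictlyStable

variable {Ω : Type*} [MeasureSpace Ω] {X : Ω → ℝ} {ν θ τ : ℝ}

lemma measurable (hX : IsStrictlyStable X ν θ τ) : Measurable X := hX.1

lemma pos (hX : IsStrictlyStable X ν θ τ) : 0 < ν := by linarith [hX.2.1]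

lemma abs_le_one (hX : IsStrictlyStable X ν θ τ) : |θ| ≤ 1 := hX.2.2.1.trans (min_le_left _ _)

lemma ae_map_ne_zero (hX : IsStrictlyStable X ν θ τ) : ∀ᵐ x ∂(ℙ : Measure Ω).map X, x ≠ 0 :=
  (ae_map_iff hX.measurable.aemeasurable (measurableSet_singleton 0).compl).mpr
    (measure_eq_zero_iff_ae_notMem.mp hX.2.2.2.1)

lemma memLp_log_abs_map (hX : IsStrictlyStable X ν θ τ) {p : ℕ} (hp : p ≠ 0) :
    MemLp (fun x => Real.log |x|) p ((ℙ : Measure Ω).map X) := by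
  have h_meas : Measurable fun x : ℝ => Real.log |x| := by fun_prop
  rw [memLp_map_measure_iff h_meas.aestronglyMeasurable hX.measurable.aemeasurable]
  refine (integrable_norm_rpow_iff (h_meas.comp hX.measurable).aestronglyMeasurable
    (by simpa) (ENNReal.natCast_ne_top p)).mp ?_
  simpa using hX.2.2.2.2.1 p

lemma charFun_map (hX : IsStrictlyStable X ν θ τ) (k : ℝ) (hk : 0 < k) :
    charFun ((ℙ : Measure Ω).map X) k = Complex.exp
      (-(stableScale (ν ^ (-(1 / 2) : ℝ)) θ τ * (k ^ (ν ^ (-(1 / 2) : ℝ)) : ℝ))) := by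
  have h_integral : charFun ((ℙ : Measure Ω).map X) k =
      ∫ ω, Complex.exp (Complex.I * k * X ω) := by
    rw [charFun_apply_real, integral_map hX.measurable.aemeasurable
      (Measurable.aestronglyMeasurable (by fun_prop))]
    congr with ω
    ring_nf
  rw [h_integral, hX.2.2.2.2.2 k hk.ne', stableScale, Real.rpow_def_of_pos hk, Complex.ofReal_exp,
    ← Complex.exp_add, Real.sign_of_pos hk, abs_of_pos hk]
  push_cast
  ring_nf

lemma inv_rpow_neg_half (hX : IsStrictlyStable X ν θ τ) : (ν ^ (-(1 / 2) : ℝ))⁻¹ = √ν := by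
  rw [Real.rpow_neg hX.pos.le, inv_inv, Real.sqrt_eq_rpow]

-- `|θ| ≤ 1` and `|θ| ≤ 2 * √ν - 1` average to `|θ| ≤ √ν`, with equality only if
-- both are equalities.
lemma abs_rpow_neg_half_mul_lt_one_or (hX : IsStrictlyStable X ν θ τ) :
    |ν ^ (-(1 / 2) : ℝ) * θ| < 1 ∨ ν = 1 ∧ |θ| = 1 := by
  have h_le := hX.abs_le_one
  have h_le' : |θ| ≤ 2 * √ν - 1 := hX.2.2.1.trans (min_le_right _ _)
  rcases lt_or_ge |θ| √ν with h_lt | h_ge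
  · left
    rwa [← inv_inv (ν ^ _), hX.inv_rpow_neg_half, abs_mul, abs_inv,
      abs_of_nonneg (Real.sqrt_nonneg ν), inv_mul_lt_one₀ (Real.sqrt_pos.mpr hX.pos)]
  · exact .inr ⟨Real.sqrt_eq_one.mp (by linarith), by linarith⟩

end IsStrictlyStable

theorem third_log_moment_of_strictlyStable {Ω : Type*} [MeasureSpace Ω]
    [IsProbabilityMeasure (ℙ : Measure Ω)] (X : Ω → ℝ) (ν θ τ : ℝ)
    (hX : IsStrictlyStable X ν θ τ)
    (DV : ℝ) (hDV : DV = Real.pi ^ 2 / 4 * (1 - θ ^ 2) + Real.pi ^ 2 / 6 * (ν - 1)) :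
    (∫ ω, (Real.log |X ω|) ^ 3) =
      τ ^ 3 + 3 * τ * DV + 2 * zetaR 3 * (ν ^ ((3 : ℝ) / 2) - 1) := by
  have h_prob : IsProbabilityMeasure ((ℙ : Measure Ω).map X) :=
    Measure.isProbabilityMeasure_map hX.measurable.aemeasurable
  have h_map : ∫ ω, Real.log |X ω| ^ 3 = ∫ x, Real.log |x| ^ 3 ∂(ℙ : Measure Ω).map X :=
    (integral_map (f := fun x : ℝ => Real.log |x| ^ 3) hX.measurable.aemeasurable
      (Measurable.aestronglyMeasurable (by fun_prop))).symm
  rw [h_map, hDV]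
  rcases hX.abs_rpow_neg_half_mul_lt_one_or with h_lt | ⟨rfl, hθ⟩
  · have h_cube : ν ^ ((3 : ℝ) / 2) = √ν ^ 3 := (Real.rpow_div_two_eq_sqrt 3 hX.pos.le).trans
      (Real.rpow_ofNat _ 3)
    rw [integral_log_abs_pow_three_of_charFun_eq_stableScale hX.ae_map_ne_zero
      (hX.memLp_log_abs_map four_ne_zero) (Real.rpow_pos_of_pos hX.pos _) h_lt hX.abs_le_one
      hX.charFun_map, hX.inv_rpow_neg_half, Real.sq_sqrt hX.pos.le, h_cube]
  · have h_charFun := hX.charFun_map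
    simp only [Real.one_rpow, Real.rpow_one] at h_charFun
    rw [integral_log_abs_pow_of_charFun_eq_stableScale_one hθ h_charFun, ← sq_abs θ, hθ]
    simp
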